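/- arXiv:2312.09157 — 2 statements merged into one kernel-verified Lean document; each statement's English description precedes it below -/
import Mathlib

section
/- Let d ≥ 7, n = d(d+1)/2, and let τ be a partition of n with n − 2d < τ₁ ≤ n − d. Then the dimension vector v_𝛕 associated to the triple 𝛕 = (ξ_d, ξ_d, τ) is a (positive) imaginary root of the star-shaped graph Γ_𝛕, i.e. v_𝛕 = w(v) for some w in the Weyl group W of Γ_𝛕 and some fundamental imaginary root v ∈ M. -/
/-!
Star-shaped graph with three legs of lengths `r 0`, `r 1`, `r 2`.
The vertex `none` is the central vertex `0`, and `some ⟨i, j⟩` is the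
vertex `[i, j+1]` on the `i`-th leg.
-/

/-- Vertex set `I` of the star-shaped graph. -/
abbrev StarVertex (r : Fin 3 → ℕ) := Option ((i : Fin 3) × Fin (r i))

/-- The entry `(e_u, e_w)` of the Cartan matrix of the star-shaped graph:
`2` on the diagonal, `-1` for adjacent vertices, `0` otherwise. -/
def cartan {r : Fin 3 → ℕ} : StarVertex r → StarVertex r → ℤ
  | none, none => 2
  | none, some p => if p.2.val = 0 then -1 else 0
  | some p, none => if p.2.val = 0 then -1 else 0
  | some p, some q =>
      if p.1 = q.1 then
        (if p.2.val = q.2.val then 2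
         else if p.2.val + 1 = q.2.val ∨ q.2.val + 1 = p.2.val then -1 else 0)
      else 0

/-- The pairing `(e_u, v)` of a basis vector `e_u` with `v ∈ ℤ^I`. -/
def pairing {r : Fin 3 → ℕ} (u : StarVertex r) (v : StarVertex r → ℤ) : ℤ :=
  ∑ w : StarVertex r, cartan u w * v w

/-- The fundamental reflection `s_u(v) = v - (v, e_u) e_u`. -/
def reflAt {r : Fin 3 → ℕ} (u : StarVertex r) (v : StarVertex r → ℤ) :
    StarVertex r → ℤ :=
  fun w => if w = u then v w - pairing u v else v w

/-- One direction of the edge relation of the star-shaped graph. -/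
def legRel {r : Fin 3 → ℕ} : StarVertex r → StarVertex r → Prop
  | none, some p => p.2.val = 0
  | some p, some q => p.1 = q.1 ∧ p.2.val + 1 = q.2.val
  | _, _ => False

/-- The star-shaped graph as a simple graph. -/
def starGraph (r : Fin 3 → ℕ) : SimpleGraph (StarVertex r) :=
  SimpleGraph.fromRel legRel

/-- `v ∈ M`: `v` is a fundamental imaginary root, i.e. `v ≠ 0`, the support of `v`
induces a connected subgraph, and `(e_u, v) ≤ 0` for every vertex `u`. -/
def IsFundImaginary {r : Fin 3 → ℕ} (v : StarVertex r → ℤ) : Prop :=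
  v ≠ 0 ∧ (SimpleGraph.induce {u | v u ≠ 0} (starGraph r)).Connected ∧
    ∀ u : StarVertex r, pairing u v ≤ 0

/-- `y` lies in the Weyl-group orbit of `x` (every element of `W` is a word in the
fundamental reflections, which are involutions). -/
def InWOrbit {r : Fin 3 → ℕ} (x y : StarVertex r → ℤ) : Prop :=
  ∃ l : List (StarVertex r), y = l.foldr reflAt x

/-- `y` lies in the orbit of `x` under the subgroup `H ≤ W` generated by the
reflections at the non-central vertices. -/
def InHOrbit {r : Fin 3 → ℕ} (x y : StarVertex r → ℤ) : Prop :=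
  ∃ l : List ((i : Fin 3) × Fin (r i)), y = l.foldr (fun p => reflAt (some p)) x

/-- The coordinates of `v` read along the `i`-th leg: `coord v i 0 = v₀` is the
central coordinate, `coord v i j = v_{[i,j]}` for `1 ≤ j ≤ r i`, and `0` beyond. -/
def coord {r : Fin 3 → ℕ} (v : StarVertex r → ℤ) (i : Fin 3) : ℕ → ℤ
  | 0 => v none
  | j + 1 => if h : j < r i then v (some ⟨i, ⟨j, h⟩⟩) else 0

/-- `δ(v) = v₀ - ∑_{i=1}^{3} (v₀ - v_{[i,1]})`. -/
def deltaInv {r : Fin 3 → ℕ} (v : StarVertex r → ℤ) : ℤ :=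
  v none - ∑ i : Fin 3, (v none - coord v i 1)

/-- `v ∈ (ℕ^I)*`: the coordinates of `v` are nonnegative and non-increasing along
each leg: `v₀ ≥ v_{[i,1]} ≥ ⋯ ≥ v_{[i,r_i]} ≥ 0`. -/
def InNStar {r : Fin 3 → ℕ} (v : StarVertex r → ℤ) : Prop :=
  ∀ (i : Fin 3) (j : ℕ), coord v i (j + 1) ≤ coord v i j

/-- The sequence `σ^i(v) = (v₀ - v_{[i,1]}, …, v_{[i,r_i-1]} - v_{[i,r_i]}, v_{[i,r_i]})`
of successive differences along the `i`-th leg (its entries are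
`sigmaSeq v i 0, …, sigmaSeq v i (r i)`; it vanishes beyond). -/
def sigmaSeq {r : Fin 3 → ℕ} (v : StarVertex r → ℤ) (i : Fin 3) (j : ℕ) : ℤ :=
  coord v i j - coord v i (j + 1)

/-- `v ∈ (ℕ^I)**`: `v ∈ (ℕ^I)*` and each `σ^i(v)` is non-increasing, i.e. `v = v_𝛍`
for a triple of partitions `𝛍`. -/
def InNStarStar {r : Fin 3 → ℕ} (v : StarVertex r → ℤ) : Prop :=
  InNStar v ∧ ∀ (i : Fin 3) (j : ℕ), sigmaSeq v i (j + 1) ≤ sigmaSeq v i j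

/-- A partition of `n`: a non-increasing sequence `parts 0 ≥ parts 1 ≥ ⋯`
(`parts j` is the `(j+1)`-th part) with exactly `len` nonzero parts summing to `n`. -/
structure PartitionOf (n : ℕ) where
  parts : ℕ → ℕ
  antitone : ∀ j : ℕ, parts (j + 1) ≤ parts j
  len : ℕ
  pos_of_lt : ∀ j < len, 0 < parts j
  zero_of_le : ∀ j : ℕ, len ≤ j → parts j = 0
  sum_parts : ∑ j ∈ Finset.range len, parts j = n

/-- The dimension vector `v_𝛍` of a triple of partitions of `n` whose parts are given
by `p 0, p 1, p 2`: coordinate `n` at the central vertex, and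
`n - (μ^i_1 + ⋯ + μ^i_j)` at the vertex `[i, j]`. -/
def dimVec (r : Fin 3 → ℕ) (n : ℕ) (p : Fin 3 → ℕ → ℕ) : StarVertex r → ℤ
  | none => (n : ℤ)
  | some q => (n : ℤ) - ∑ s ∈ Finset.range (q.2.val + 1), (p q.1 s : ℤ)

section Pairing

variable {r : Fin 3 → ℕ}

lemma pairing_none (v : StarVertex r → ℤ) :
    pairing none v = 2 * v none - ∑ i, coord v i 1 := by
  have leg : ∀ i : Fin 3,
      ∑ x : Fin (r i), cartan (none : StarVertex r) (some ⟨i, x⟩) * v (some ⟨i, x⟩)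
        = -coord v i 1 := by
    intro i
    let g : ℕ → ℤ := fun y => if y = 0 then -coord v i (y + 1) else 0
    have h : ∀ x : Fin (r i),
        cartan (none : StarVertex r) (some ⟨i, x⟩) * v (some ⟨i, x⟩) = g x := by
      intro x
      simp [g, cartan, coord]
    rw [Finset.sum_congr rfl (fun x _ => h x), Fin.sum_univ_eq_sum_range g, Finset.sum_ite_eq']
    by_cases h0 : 0 < r i <;> simp [h0, coord]
  rw [pairing, Fintype.sum_option, Fintype.sum_sigma, Finset.sum_congr rfl (fun i _ => leg i),
    Finset.sum_neg_distrib]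
  simp [cartan, sub_eq_add_neg]

lemma pairing_some (v : StarVertex r → ℤ) (i : Fin 3) (j : Fin (r i)) :
    pairing (some ⟨i, j⟩) v = 2 * coord v i (j + 1) - coord v i j - coord v i (j + 2) := by
  have other : ∀ i' ∈ (Finset.univ : Finset (Fin 3)), i' ≠ i →
      ∑ x : Fin (r i'), cartan (some ⟨i, j⟩ : StarVertex r) (some ⟨i', x⟩) * v (some ⟨i', x⟩)
        = 0 := by
    intro i' _ hi
    simp [cartan, hi.symm]
  let g : ℕ → ℤ := fun y =>
    (if (j : ℕ) = y then 2 * coord v i (y + 1) else 0)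
      - (if (j : ℕ) + 1 = y then coord v i (y + 1) else 0)
      - (if y = (j : ℕ) - 1 then (if (j : ℕ) = 0 then 0 else coord v i (y + 1)) else 0)
  have h : ∀ x : Fin (r i),
      cartan (some ⟨i, j⟩ : StarVertex r) (some ⟨i, x⟩) * v (some ⟨i, x⟩) = g x := by
    intro x
    have hx : coord v i (x + 1) = v (some ⟨i, x⟩) := by simp [coord]
    simp only [g, cartan, hx, if_true]
    split_ifs <;> omega
  rw [pairing, Fintype.sum_option, Fintype.sum_sigma, Finset.sum_eq_single i other (by simp),
    Finset.sum_congr rfl (fun x _ => h x), Fin.sum_univ_eq_sum_range g, Finset.sum_sub_distrib,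
    Finset.sum_sub_distrib, Finset.sum_ite_eq, Finset.sum_ite_eq, Finset.sum_ite_eq']
  have hj := j.isLt
  have hend : (if (j : ℕ) + 1 ∈ Finset.range (r i) then coord v i (j + 1 + 1) else 0)
      = coord v i (j + 2) := by
    by_cases h1 : (j : ℕ) + 1 < r i <;> simp [h1, coord]
  rw [hend]
  have hprev : (j : ℕ) - 1 ∈ Finset.range (r i) := by simp; omega
  simp only [hprev, Finset.mem_range, hj, if_true]
  rcases Nat.eq_zero_or_pos (j : ℕ) with h0 | h0
  · simp [cartan, h0, coord]; ring
  · have h1 : (j : ℕ) - 1 + 1 = j := by omega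
    have h2 : (j : ℕ) ≠ 0 := by omega
    simp [cartan, h2, h1]; ring

lemma sum_reflAt (u : StarVertex r) (v : StarVertex r → ℤ) :
    ∑ w, reflAt u v w = ∑ w, v w - pairing u v := by
  have h : ∀ w, reflAt u v w = v w - if w = u then pairing u v else 0 := by
    intro w
    unfold reflAt
    split_ifs <;> simp
  simp [h, Finset.sum_sub_distrib]

end Pairing

section PartsVec

variable {r : Fin 3 → ℕ}

/-- The vector with central coordinate `N` whose successive differences along the `i`-th leg
are `p i 0, p i 1, …`. -/
def partsVec (r : Fin 3 → ℕ) (N : ℤ) (p : Fin 3 → ℕ → ℤ) : StarVertex r → ℤ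
  | none => N
  | some q => N - ∑ s ∈ Finset.range (q.2.val + 1), p q.1 s

/-- Every leg of the parts `p` has total `N`. -/
def HasTotal (r : Fin 3 → ℕ) (N : ℤ) (p : Fin 3 → ℕ → ℤ) : Prop :=
  ∀ i, ∑ s ∈ Finset.range (r i + 1), p i s = N

/-- If the parts `p` have total `N`, then `partsVec r N p` is in the Weyl-group orbit of a
fundamental imaginary root. -/
def PartsImaginary (r : Fin 3 → ℕ) (N : ℤ) (p : Fin 3 → ℕ → ℤ) : Prop :=
  HasTotal r N p → ∃ v : StarVertex r → ℤ, IsFundImaginary v ∧ InWOrbit v (partsVec r N p)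

/-- Permute the parts of leg `i` by `σ`. -/
def permLeg (i : Fin 3) (σ : Equiv.Perm ℕ) (p : Fin 3 → ℕ → ℤ) : Fin 3 → ℕ → ℤ :=
  fun i' s => if i' = i then p i' (σ s) else p i' s

lemma InWOrbit.reflAt {x y : StarVertex r → ℤ} (h : InWOrbit x y) (u : StarVertex r) :
    InWOrbit x (_root_.reflAt u y) := by
  obtain ⟨l, rfl⟩ := h
  exact ⟨u :: l, rfl⟩

lemma coord_partsVec {N : ℤ} {p : Fin 3 → ℕ → ℤ} (hp : HasTotal r N p) (i : Fin 3) {j : ℕ}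
    (hj : j ≤ r i + 1) :
    coord (partsVec r N p) i j = N - ∑ s ∈ Finset.range j, p i s := by
  cases j with
  | zero => simp [coord, partsVec]
  | succ j =>
    by_cases h : j < r i
    · simp [coord, partsVec, h]
    · obtain rfl : j = r i := by omega
      simp [coord, hp i]

lemma pairing_none_partsVec {N : ℤ} {p : Fin 3 → ℕ → ℤ} (hp : HasTotal r N p) :
    pairing none (partsVec r N p) = ∑ i, p i 0 - N := by
  have h : ∀ i, coord (partsVec r N p) i 1 = N - p i 0 := by
    intro i
    simp [coord_partsVec hp i (show 1 ≤ r i + 1 by omega)]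
  simp only [pairing_none, h, Finset.sum_sub_distrib]
  simp [partsVec]
  ring

lemma pairing_some_partsVec {N : ℤ} {p : Fin 3 → ℕ → ℤ} (hp : HasTotal r N p) (i : Fin 3)
    (j : Fin (r i)) :
    pairing (some ⟨i, j⟩) (partsVec r N p) = p i (j + 1) - p i j := by
  have hj := j.isLt
  rw [pairing_some, coord_partsVec hp i (by omega), coord_partsVec hp i (by omega),
    coord_partsVec hp i (by omega), Finset.sum_range_succ _ ((j : ℕ) + 1),
    Finset.sum_range_succ _ (j : ℕ)]
  ring

lemma sum_range_swap (f : ℕ → ℤ) {a b m : ℕ} (ha : a < m) (hb : b < m) :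
    ∑ s ∈ Finset.range m, f (Equiv.swap a b s) = ∑ s ∈ Finset.range m, f s := by
  refine Equiv.Perm.sum_comp _ _ _ fun s hs => ?_
  by_contra hs'
  refine hs (Equiv.swap_apply_of_ne_of_ne ?_ ?_) <;>
  · rintro rfl
    exact hs' (by simpa)

lemma permLeg_swap_permLeg_swap (i : Fin 3) (a b : ℕ) (p : Fin 3 → ℕ → ℤ) :
    permLeg i (Equiv.swap a b) (permLeg i (Equiv.swap a b) p) = p := by
  funext i' s
  by_cases h : i' = i <;> simp [permLeg, h]

lemma HasTotal.permLeg_swap {N : ℤ} {p : Fin 3 → ℕ → ℤ} (hp : HasTotal r N p) (i : Fin 3)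
    {a b : ℕ} (ha : a ≤ r i) (hb : b ≤ r i) :
    HasTotal r N (permLeg i (Equiv.swap a b) p) := by
  intro i'
  by_cases h : i' = i
  · subst h
    simp only [permLeg, if_true]
    rw [sum_range_swap (p i') (by omega) (by omega), hp]
  · have htot := hp i'
    simpa [permLeg, h] using htot

/-- The reflection at a non-central vertex exchanges two adjacent parts. -/
lemma reflAt_some_partsVec {N : ℤ} {p : Fin 3 → ℕ → ℤ} (hp : HasTotal r N p) (i : Fin 3)
    (j : Fin (r i)) :
    reflAt (some ⟨i, j⟩) (partsVec r N p)
      = partsVec r N (permLeg i (Equiv.swap (j : ℕ) (j + 1)) p) := by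
  funext w
  rcases w with _ | ⟨i', j'⟩
  · simp [reflAt, partsVec]
  · by_cases hi : i' = i
    · subst hi
      rcases lt_trichotomy (j' : ℕ) j with h | h | h
      · have hne : (some ⟨i', j'⟩ : StarVertex r) ≠ some ⟨i', j⟩ := by
          intro he
          simp only [Option.some.injEq, Sigma.mk.injEq, heq_eq_eq, true_and] at he
          subst he
          omega
        simp only [reflAt, hne, if_false, partsVec, permLeg, if_true]
        congr 1
        refine Finset.sum_congr rfl fun s hs => ?_
        rw [Finset.mem_range] at hs
        rw [Equiv.swap_apply_of_ne_of_ne (by omega) (by omega)]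
      · obtain rfl : j' = j := Fin.ext h
        simp only [reflAt, if_true, pairing_some_partsVec hp, partsVec, permLeg]
        have hc : ∑ s ∈ Finset.range (j' : ℕ), p i' (Equiv.swap (j' : ℕ) (j' + 1) s)
            = ∑ s ∈ Finset.range (j' : ℕ), p i' s := by
          refine Finset.sum_congr rfl fun s hs => ?_
          rw [Finset.mem_range] at hs
          rw [Equiv.swap_apply_of_ne_of_ne (by omega) (by omega)]
        rw [Finset.sum_range_succ, Finset.sum_range_succ, hc, Equiv.swap_apply_left]
        ring
      · have hne : (some ⟨i', j'⟩ : StarVertex r) ≠ some ⟨i', j⟩ := by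
          intro he
          simp only [Option.some.injEq, Sigma.mk.injEq, heq_eq_eq, true_and] at he
          subst he
          omega
        simp only [reflAt, hne, if_false, partsVec, permLeg, if_true]
        rw [sum_range_swap (p i') (by omega) (by omega)]
    · have hne : (some ⟨i', j'⟩ : StarVertex r) ≠ some ⟨i, j⟩ := by
        intro he
        simp only [Option.some.injEq, Sigma.mk.injEq] at he
        exact hi he.1
      simp [reflAt, hne, partsVec, permLeg, hi]

/-- The reflection at the central vertex subtracts its pairing from the first part of every
leg. -/
lemma reflAt_none_partsVec {N : ℤ} {p : Fin 3 → ℕ → ℤ} (hp : HasTotal r N p) {c : ℤ}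
    (hc : ∑ i, p i 0 - N = c) :
    reflAt none (partsVec r N p)
      = partsVec r (N - c) (fun i s => p i s - if s = 0 then c else 0) := by
  funext w
  rcases w with _ | ⟨i, j⟩
  · simp [reflAt, pairing_none_partsVec hp, hc, partsVec]
  · simp [reflAt, partsVec, Finset.sum_sub_distrib]

lemma PartsImaginary.of_swap_adjacent {N : ℤ} {p : Fin 3 → ℕ → ℤ} (i : Fin 3) {j : ℕ}
    (hj : j < r i) (h : PartsImaginary r N (permLeg i (Equiv.swap j (j + 1)) p)) :
    PartsImaginary r N p := by
  intro hp
  have hq := hp.permLeg_swap i (show j ≤ r i by omega) (show j + 1 ≤ r i by omega)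
  obtain ⟨v, hv, ho⟩ := h hq
  refine ⟨v, hv, ?_⟩
  have := ho.reflAt (some ⟨i, ⟨j, hj⟩⟩)
  rwa [reflAt_some_partsVec hq, permLeg_swap_permLeg_swap] at this

lemma PartsImaginary.of_swap_zero {N : ℤ} (i : Fin 3) {j : ℕ} (hj : j ≤ r i)
    {p : Fin 3 → ℕ → ℤ} (h : PartsImaginary r N (permLeg i (Equiv.swap 0 j) p)) :
    PartsImaginary r N p := by
  induction j generalizing p with
  | zero =>
    have : permLeg i (Equiv.swap 0 0) p = p := by
      funext i' s
      simp [permLeg]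
    rwa [this] at h
  | succ j ih =>
    rcases Nat.eq_zero_or_pos j with rfl | h0
    · exact h.of_swap_adjacent i (by omega)
    refine PartsImaginary.of_swap_adjacent i (j := j) (by omega) (ih (by omega) ?_)
    refine PartsImaginary.of_swap_adjacent i (j := j) (by omega) ?_
    convert h using 1
    funext i' s
    by_cases hi : i' = i
    · simp only [permLeg, hi, if_true]
      congr 1
      have := Equiv.swap_mul_swap_mul_swap (x := 0) (y := j) (z := j + 1) (by omega) (by omega)
      rw [Equiv.swap_comm (j + 1) 0] at this
      exact congrArg (fun e : Equiv.Perm ℕ => e s) this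
    · simp [permLeg, hi]

/-- Reflecting after the parts `p i (j i)` have been moved to the front of their legs. -/
lemma PartsImaginary.of_sub {N c : ℤ} {p : Fin 3 → ℕ → ℤ} (j : Fin 3 → ℕ)
    (hj : ∀ i, j i ≤ r i) (hc : ∑ i, p i (j i) - N = c)
    (h : PartsImaginary r (N - c) (fun i s => p i s - if s = j i then c else 0)) :
    PartsImaginary r N p := by
  have key : ∀ (M : ℤ) (q : Fin 3 → ℕ → ℤ),
      PartsImaginary r M (fun i s => q i (Equiv.swap 0 (j i) s)) → PartsImaginary r M q := by
    intro M q hq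
    refine .of_swap_zero 0 (hj 0) (.of_swap_zero 1 (hj 1) (.of_swap_zero 2 (hj 2) ?_))
    convert hq using 1
    funext i s
    fin_cases i <;> simp [permLeg]
  refine key N p fun hp => ?_
  set q : Fin 3 → ℕ → ℤ := fun i s => p i (Equiv.swap 0 (j i) s) with hq
  set q' : Fin 3 → ℕ → ℤ := fun i s => q i s - if s = 0 then c else 0 with hq'
  have hc' : ∑ i, q i 0 - N = c := by simpa [hq] using hc
  have htot : HasTotal r (N - c) q' := by
    intro i
    simp only [hq', Finset.sum_sub_distrib, hp i]
    simp
  have himag : PartsImaginary r (N - c) q' := by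
    refine key _ _ ?_
    have : (fun i s => q' i (Equiv.swap 0 (j i) s))
        = fun i s => p i s - if s = j i then c else 0 := by
      funext i s
      simp only [hq', hq, Equiv.swap_apply_self, Equiv.swap_apply_eq_iff, Equiv.swap_apply_left]
    rwa [this]
  obtain ⟨v, hv, ho⟩ := himag htot
  refine ⟨v, hv, ?_⟩
  have hneg : ∑ i, q' i 0 - (N - c) = -c := by
    simp only [hq', if_true, Finset.sum_sub_distrib]
    simp
    linarith
  have hback := ho.reflAt none
  rw [reflAt_none_partsVec htot hneg] at hback
  convert hback using 2
  · ring
  · funext i s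
    simp only [hq']
    split_ifs <;> ring

lemma partsVec_nonneg {N : ℤ} {p : Fin 3 → ℕ → ℤ} (hp : HasTotal r N p)
    (hnn : ∀ i s, 0 ≤ p i s) (w : StarVertex r) : 0 ≤ partsVec r N p w := by
  rcases w with _ | ⟨i, j⟩
  · simpa [partsVec, ← hp 0] using Finset.sum_nonneg fun s _ => hnn 0 s
  · have : ∑ s ∈ Finset.range ((j : ℕ) + 1), p i s ≤ ∑ s ∈ Finset.range (r i + 1), p i s :=
      Finset.sum_le_sum_of_subset_of_nonneg
        (Finset.range_subset_range.2 (by omega)) fun s _ _ => hnn i s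
    rw [hp i] at this
    simpa [partsVec] using this

lemma isFundImaginary_partsVec {N : ℤ} {p : Fin 3 → ℕ → ℤ} (hp : HasTotal r N p) (hN : 0 < N)
    (hnn : ∀ i s, 0 ≤ p i s) (hanti : ∀ i, ∀ j < r i, p i (j + 1) ≤ p i j)
    (hle : ∑ i, p i 0 ≤ N) : IsFundImaginary (partsVec r N p) := by
  have hnone : partsVec r N p none ≠ 0 := by
    simpa [partsVec] using hN.ne'
  refine ⟨fun h => hnone (congrFun h none), ?_, ?_⟩
  · rw [SimpleGraph.connected_iff_exists_forall_reachable]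
    refine ⟨⟨none, hnone⟩, ?_⟩
    rintro ⟨_ | ⟨i, j, hj⟩, hw⟩
    · rfl
    · induction j with
      | zero =>
        refine SimpleGraph.Adj.reachable ?_
        simp [starGraph, legRel]
      | succ j ih =>
        have hstep : partsVec r N p (some ⟨i, ⟨j, by omega⟩⟩) ≠ 0 := by
          have h0 := partsVec_nonneg hp hnn (some ⟨i, ⟨j + 1, hj⟩⟩)
          have h1 := hnn i (j + 1)
          simp only [Set.mem_ofPred_eq, partsVec] at hw h0 ⊢
          rw [Finset.sum_range_succ] at hw h0
          omega
        refine (ih (by omega) hstep).trans (SimpleGraph.Adj.reachable ?_)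
        simp [starGraph, legRel]
  · rintro (_ | ⟨i, j⟩)
    · rw [pairing_none_partsVec hp]
      linarith
    · rw [pairing_some_partsVec hp]
      linarith [hanti i j j.isLt]

/-- Parts which satisfy the inequality at the central vertex in every order. -/
lemma PartsImaginary.of_forall_le {N : ℤ} (hN : 0 < N) {p : Fin 3 → ℕ → ℤ}
    (hnn : ∀ i s, 0 ≤ p i s) (hle : ∀ j : Fin 3 → ℕ, ∑ i, p i (j i) ≤ N) :
    PartsImaginary r N p := by
  suffices H : ∀ (K : ℕ) (p : Fin 3 → ℕ → ℤ), (∀ i s, 0 ≤ p i s) →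
      (∀ j : Fin 3 → ℕ, ∑ i, p i (j i) ≤ N) → ∑ w, partsVec r N p w ≤ K →
      PartsImaginary r N p from
    H _ p hnn hle (Int.self_le_toNat _)
  intro K
  induction K with
  | zero =>
    intro p hnn _ hK hp
    have := Finset.single_le_sum (fun w _ => partsVec_nonneg hp hnn w)
      (Finset.mem_univ (none : StarVertex r))
    simp only [partsVec, Nat.cast_zero] at this hK
    omega
  | succ K ih =>
    intro p hnn hle hK hp
    by_cases hanti : ∀ i, ∀ j < r i, p i (j + 1) ≤ p i j
    · exact ⟨_, isFundImaginary_partsVec hp hN hnn hanti (hle 0), [], rfl⟩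
    · push Not at hanti
      obtain ⟨i, j, hj, hlt⟩ := hanti
      refine PartsImaginary.of_swap_adjacent i hj (ih _ ?_ ?_ ?_) hp
      · intro i' s
        unfold permLeg
        split_ifs <;> exact hnn _ _
      · intro t
        refine le_of_eq_of_le ?_
          (hle fun i' => if i' = i then Equiv.swap j (j + 1) (t i') else t i')
        refine Finset.sum_congr rfl fun i' _ => ?_
        unfold permLeg
        split_ifs <;> rfl
      · have hs := sum_reflAt (some ⟨i, ⟨j, hj⟩⟩) (partsVec r N p)
        rw [pairing_some_partsVec hp, reflAt_some_partsVec hp] at hs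
        push_cast at hK
        simp only at hs
        omega

end PartsVec

section Staircase

/-- The parts obtained from `(ξ_d, ξ_d, a)` by `m` steps, the `s`-th of which lowers the `s`-th
part of both staircases and the first part of `a` by `k - 2 s`. -/
def stairParts (d k : ℕ) (a : ℕ → ℕ) (m : ℕ) : Fin 3 → ℕ → ℤ :=
  let ξ : ℕ → ℤ := fun s => ((d - s : ℕ) : ℤ) - if s < m then (k : ℤ) - 2 * s else 0
  ![ξ, ξ, fun s => (a s : ℤ) - if s = 0 then (m : ℤ) * (k - m + 1) else 0]

lemma PartsImaginary.of_stairParts {r : Fin 3 → ℕ} {d k n : ℕ} {a : ℕ → ℕ}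
    (hk : (k : ℤ) = 2 * d + a 0 - n) {m : ℕ} (hmd : m ≤ d) (h0 : m ≤ r 0 + 1)
    (h1 : m ≤ r 1 + 1)
    (h : PartsImaginary r (n - (m : ℤ) * (k - m + 1)) (stairParts d k a m)) :
    PartsImaginary r n (stairParts d k a 0) := by
  induction m with
  | zero => simpa using h
  | succ m ih =>
    refine ih (by omega) (by omega) (by omega)
      (PartsImaginary.of_sub (c := (k : ℤ) - 2 * m) ![m, m, 0] ?_ ?_ ?_)
    · intro i
      fin_cases i <;> simp <;> omega
    · simp [stairParts, Fin.sum_univ_three, Nat.cast_sub (show m ≤ d by omega), hk]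
      ring
    · convert h using 1
      · push_cast
        ring
      · funext i s
        fin_cases i
        · simp only [stairParts]
          simp
          split_ifs <;> omega
        · simp only [stairParts]
          simp
          split_ifs <;> omega
        · by_cases hs : s = 0
          · simp [stairParts, hs]
            ring
          · simp [stairParts, hs]

lemma stairParts_nonneg_and_le {d k m s : ℕ} (hkd : k ≤ d) (hm : k ≤ 2 * m) (hm' : 2 * m ≤ k + 1) :
    0 ≤ ((d - s : ℕ) : ℤ) - (if s < m then (k : ℤ) - 2 * s else 0) ∧
      ((d - s : ℕ) : ℤ) - (if s < m then (k : ℤ) - 2 * s else 0) ≤ d - m := by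
  split_ifs <;> omega

lemma two_mul_sum_stair (d : ℕ) : 2 * ∑ s ∈ Finset.range d, (d - s) = d * (d + 1) := by
  have h := Finset.sum_range_reflect (fun s => s + 1) d
  have h2 : ∑ s ∈ Finset.range d, (d - s) = ∑ s ∈ Finset.range d, (s + 1) := by
    rw [← h]
    refine Finset.sum_congr rfl fun s hs => ?_
    rw [Finset.mem_range] at hs
    omega
  rw [h2, Finset.sum_add_distrib, mul_add, mul_comm 2, Finset.sum_range_id_mul_two]
  simp
  cases d with
  | zero => rfl
  | succ d => simp; ring

lemma PartitionOf.sum_le {n : ℕ} (τ : PartitionOf n) (S : Finset ℕ) : ∑ j ∈ S, τ.parts j ≤ n := by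
  calc ∑ j ∈ S, τ.parts j ≤ ∑ j ∈ S ∪ Finset.range τ.len, τ.parts j :=
        Finset.sum_le_sum_of_subset Finset.subset_union_left
    _ = ∑ j ∈ Finset.range τ.len, τ.parts j := by
        refine (Finset.sum_subset Finset.subset_union_right fun j _ hj => ?_).symm
        exact τ.zero_of_le j (by simpa using hj)
    _ = n := τ.sum_parts

/-- The parts reached after all steps have `p 0 + p 1 + p 2 ≤ N` in every order, once the parts
of `a` but the first are small enough. -/
lemma PartsImaginary.stairParts_of_forall_le {r : Fin 3 → ℕ} {d k n m : ℕ} {a : ℕ → ℕ}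
    (hk : (k : ℤ) = 2 * d + a 0 - n) (hkd : k ≤ d) (hm : k ≤ 2 * m) (hm' : 2 * m ≤ k + 1)
    (hN : (m : ℤ) * (k - m + 1) < n) (ha : (m : ℤ) * (k - m + 1) ≤ a 0)
    (hle : ∀ s ≠ 0, 2 * (d : ℤ) - 2 * m + a s + m * (k - m + 1) ≤ n) :
    PartsImaginary r (n - (m : ℤ) * (k - m + 1)) (stairParts d k a m) := by
  have hb := fun s => stairParts_nonneg_and_le (s := s) hkd hm hm'
  refine .of_forall_le (by linarith) ?_ ?_
  · intro i s
    fin_cases i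
    · exact (hb s).1
    · exact (hb s).1
    · by_cases hs : s = 0
      · simpa [stairParts, hs] using ha
      · simp [stairParts, hs]
  · intro j
    have h0 : stairParts d k a m 0 (j 0) ≤ d - m := (hb _).2
    have h1 : stairParts d k a m 1 (j 1) ≤ d - m := (hb _).2
    have h2 : stairParts d k a m 2 (j 2)
        = a (j 2) - if j 2 = 0 then (m : ℤ) * (k - m + 1) else 0 := rfl
    rw [Fin.sum_univ_three]
    by_cases hs : j 2 = 0
    · rw [hs, if_pos rfl] at h2
      rw [hs]
      have : (k : ℤ) ≤ 2 * m := by exact_mod_cast hm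
      linarith
    · rw [if_neg hs] at h2
      linarith [hle _ hs]

/-- The triple `(ξ₇, ξ₇, (21, 7))`, after the four steps of `stairParts`. -/
lemma PartsImaginary.stairParts_seven {r : Fin 3 → ℕ} (h0 : r 0 = 6) (h1 : r 1 = 6) {a : ℕ → ℕ}
    (ha : a 0 = 21) {t : ℕ} (ht0 : t ≠ 0) (ht : t ≤ r 2) (hat : a t = 7)
    (hz : ∀ s, s ≠ 0 → s ≠ t → a s = 0) :
    PartsImaginary r 12 (stairParts 7 7 a 4) := by
  refine .of_sub (c := 1) ![3, 3, t] ?_ ?_ (.of_sub (c := 1) ![4, 4, t] ?_ ?_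
    (.of_forall_le (by norm_num) ?_ ?_))
  · intro i
    fin_cases i <;> simp [h0, h1, ht]
  · rw [Fin.sum_univ_three]
    simp [stairParts, ht0, hat]
  · intro i
    fin_cases i <;> simp [h0, h1, ht]
  · rw [Fin.sum_univ_three]
    simp [stairParts, ht0, hat]
  all_goals
    have hξ : ∀ s : ℕ,
        0 ≤ ((7 - s : ℕ) : ℤ) - (if s < 4 then 7 - 2 * (s : ℤ) else 0) - (if s = 3 then 1 else 0)
          - (if s = 4 then 1 else 0) ∧
        ((7 - s : ℕ) : ℤ) - (if s < 4 then 7 - 2 * (s : ℤ) else 0) - (if s = 3 then 1 else 0)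
          - (if s = 4 then 1 else 0) ≤ 2 := by
      intro s
      split_ifs <;> omega
    have hτ : ∀ s : ℕ,
        0 ≤ (a s : ℤ) - (if s = 0 then 4 * (7 - 4 + 1) else 0) - (if s = t then 1 else 0)
          - (if s = t then 1 else 0) ∧
        (a s : ℤ) - (if s = 0 then 4 * (7 - 4 + 1) else 0) - (if s = t then 1 else 0)
          - (if s = t then 1 else 0) ≤ 5 := by
      intro s
      by_cases hs : s = 0
      · simp [hs, ha, ht0.symm]
      · by_cases hst : s = t
        · simp [hst, ht0, hat]
        · simp [hs, hst, hz s hs hst]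
  · intro i s
    fin_cases i
    · exact (hξ s).1
    · exact (hξ s).1
    · exact (hτ s).1
  · intro j
    rw [Fin.sum_univ_three]
    have := add_le_add (add_le_add (hξ (j 0)).2 (hξ (j 1)).2) (hτ (j 2)).2
    refine le_trans this (by norm_num)

end Staircase

/-- If `d ≥ 7` and `n - 2d < τ₁ ≤ n - d` then the dimension vector of
`(ξ_d, ξ_d, τ)` is a positive imaginary root of `Γ_𝛕`: it is of the form `w(v)`
with `w` in the Weyl group and `v` a fundamental imaginary root. -/
theorem staircase_dimVec_imaginary_of_between (d : ℕ) (hd : 7 ≤ d) (n : ℕ)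
    (hn : n = d * (d + 1) / 2) (τ : PartitionOf n)
    (hτ₁ : (n : ℤ) - 2 * d < (τ.parts 0 : ℤ))
    (hτ₂ : (τ.parts 0 : ℤ) ≤ (n : ℤ) - d) :
    ∃ v : StarVertex ![d - 1, d - 1, τ.len - 1] → ℤ,
      IsFundImaginary v ∧
      InWOrbit v
        (dimVec ![d - 1, d - 1, τ.len - 1] n
          ![fun s => d - s, fun s => d - s, τ.parts]) := by
  have hn2 : 2 * n = d * (d + 1) := by
    have := (Nat.even_mul_succ_self d).two_dvd
    omega
  have hnZ : 2 * (n : ℤ) = d * (d + 1) := by exact_mod_cast hn2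
  have hdZ : (7 : ℤ) ≤ d := by exact_mod_cast hd
  have hn0 : 28 ≤ n := by nlinarith
  obtain ⟨k, hk⟩ : ∃ k : ℕ, (k : ℤ) = 2 * d + τ.parts 0 - n :=
    ⟨(2 * d + τ.parts 0 - n : ℤ).toNat, Int.toNat_of_nonneg (by omega)⟩
  have hkd : k ≤ d := by omega
  have hk1 : 1 ≤ k := by omega
  have hlen : τ.len ≠ 0 := by
    intro h
    have := τ.sum_parts
    simp [h] at this
    omega
  have hpair : ∀ s ≠ 0, τ.parts 0 + τ.parts s ≤ n := by
    intro s hs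
    simpa [Finset.sum_pair hs.symm] using τ.sum_le {0, s}
  obtain ⟨m, hm, hm'⟩ : ∃ m, k ≤ 2 * m ∧ 2 * m ≤ k + 1 := ⟨(k + 1) / 2, by omega, by omega⟩
  have hvec : dimVec ![d - 1, d - 1, τ.len - 1] n ![fun s => d - s, fun s => d - s, τ.parts]
      = partsVec ![d - 1, d - 1, τ.len - 1] n (stairParts d k τ.parts 0) := by
    funext w
    rcases w with _ | ⟨i, j⟩
    · rfl
    · simp only [dimVec, partsVec]
      congr 1
      refine Finset.sum_congr rfl fun s _ => ?_
      fin_cases i <;> simp [stairParts]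
  have htot : HasTotal ![d - 1, d - 1, τ.len - 1] n (stairParts d k τ.parts 0) := by
    have hξ : ∑ s ∈ Finset.range (d - 1 + 1), ((d - s : ℕ) : ℤ) = n := by
      have := two_mul_sum_stair d
      rw [show d - 1 + 1 = d by omega, ← Nat.cast_sum]
      congr 1
      omega
    have hτ : ∑ s ∈ Finset.range (τ.len - 1 + 1), (τ.parts s : ℤ) = n := by
      rw [show τ.len - 1 + 1 = τ.len by omega, ← Nat.cast_sum, τ.sum_parts]
    intro i
    fin_cases i
    · simpa [stairParts] using hξ
    · simpa [stairParts] using hξ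
    · simpa [stairParts] using hτ
  rw [hvec]
  refine PartsImaginary.of_stairParts (m := m) hk (by omega) (by simp; omega) (by simp; omega) ?_
    htot
  have hmk : (m : ℤ) * 2 = k ∨ (m : ℤ) * 2 = k + 1 := by omega
  have hm1 : (1 : ℤ) ≤ m := by omega
  have hmd : (m : ℤ) * 2 ≤ d + 1 := by omega
  by_cases hex : d = 7 ∧ k = 7 ∧ ∃ t, t ≠ 0 ∧ τ.parts t = 7
  · obtain ⟨rfl, rfl, t, ht0, ht⟩ := hex
    obtain rfl : m = 4 := by omega
    obtain rfl : n = 28 := by omega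
    have htl : t < τ.len := by
      by_contra h
      have := τ.zero_of_le t (by omega)
      omega
    have h21 : τ.parts 0 = 21 := by omega
    have := PartsImaginary.stairParts_seven (r := ![7 - 1, 7 - 1, τ.len - 1]) rfl rfl h21 ht0
      (by simp; omega) ht (by
        intro s hs hst
        have h3 := τ.sum_le {0, t, s}
        rw [Finset.sum_insert (by simp [ht0.symm, hs.symm]), Finset.sum_pair (Ne.symm hst)] at h3
        omega)
    simpa using this
  · have key : ∀ s ≠ 0, 2 * (d : ℤ) - 2 * m + τ.parts s + m * (k - m + 1) ≤ n := by
      intro s hs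
      have h1 : (τ.parts s : ℤ) ≤ 2 * d - k := by have := hpair s hs; omega
      by_cases hd8 : 8 ≤ d
      · have hd8' : (8 : ℤ) ≤ d := by exact_mod_cast hd8
        rcases hmk with h | h
        · have hk' : (k : ℤ) = m * 2 := by omega
          rw [hk'] at h1 ⊢
          nlinarith
        · have hk' : (k : ℤ) = m * 2 - 1 := by omega
          rw [hk'] at h1 ⊢
          nlinarith
      · obtain rfl : d = 7 := by omega
        obtain rfl : n = 28 := by omega
        have h7 : k = 7 → τ.parts s ≠ 7 := fun hk7 h => hex ⟨rfl, hk7, s, hs, h⟩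
        have hm4 : m ≤ 4 := by omega
        interval_cases m <;> interval_cases k <;> omega
    have ha : (m : ℤ) * (k - m + 1) ≤ τ.parts 0 := by
      have h0 : (τ.parts 0 : ℤ) = n - 2 * d + k := by omega
      rw [h0]
      rcases hmk with h | h
      · have hk' : (k : ℤ) = m * 2 := by omega
        rw [hk']
        nlinarith
      · have hk' : (k : ℤ) = m * 2 - 1 := by omega
        rw [hk']
        nlinarith
    exact .stairParts_of_forall_le hk hkd hm hm' (by omega) ha key
end

section
/- Let k ≥ 0 and let μ be a partition of 2k with μ₁ ≤ k. Then there exists a sequence of partitions ∅ = λ⁰, λ¹, …, λ^k = μ such that for every 0 ≤ j ≤ k one has |λ^j| = 2j and λ^j_1 ≤ j, and for every 0 ≤ j < k the partition λ^{j+1} is obtained from λ^j by adding two boxes, no two in the same row (λ^j_i ≤ λ^{j+1}_i ≤ λ^j_i + 1 for all i). -/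
/-- A non-increasing sequence that vanishes from `N` on and sums to `n` is the sequence of parts
of a partition of `n`. -/
theorem PartitionOf.exists_parts_eq {n : ℕ} (f : ℕ → ℕ) (hf : Antitone f) (N : ℕ) (hN : f N = 0)
    (hsum : ∑ j ∈ Finset.range N, f j = n) : ∃ p : PartitionOf n, p.parts = f := by
  classical
  have hex : ∃ m, f m = 0 := ⟨N, hN⟩
  have hzero : ∀ j, Nat.find hex ≤ j → f j = 0 := fun j hj =>
    Nat.le_zero.mp ((hf hj).trans (Nat.find_spec hex).le)
  refine ⟨⟨f, fun j => hf j.le_succ, Nat.find hex,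
    fun j hj => Nat.pos_of_ne_zero (Nat.find_min hex hj), hzero, ?_⟩, rfl⟩
  rw [← hsum]
  refine Finset.sum_subset (Finset.range_mono (Nat.find_min' hex hN)) fun j _ hj => hzero j ?_
  simpa using hj

theorem PartitionOf.nonempty (n : ℕ) : Nonempty (PartitionOf n) := by
  obtain ⟨p, -⟩ := PartitionOf.exists_parts_eq (n := n) (fun j => if j < n then 1 else 0)
    (antitone_nat_of_succ_le fun j => by split_ifs <;> omega) n (by simp)
    (by rw [Finset.sum_congr rfl fun j hj => if_pos (Finset.mem_range.mp hj)]; simp)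
  exact ⟨p⟩

/-- Two boxes, in distinct rows, can be removed from a partition of `2(k+1)` with first part at
most `k+1` so as to leave a partition with first part at most `k`: one in the last row, and one in
the lowest of the other rows that are as long as the first. -/
theorem PartitionOf.exists_remove_two (k : ℕ) (μ : PartitionOf (2 * (k + 1)))
    (hμ : μ.parts 0 ≤ k + 1) :
    ∃ ν : PartitionOf (2 * k), ν.parts 0 ≤ k ∧
      ∀ i, ν.parts i ≤ μ.parts i ∧ μ.parts i ≤ ν.parts i + 1 := by
  obtain ⟨f, hf, len, hpos, hzero, hsum⟩ := μ
  dsimp only at hμ ⊢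
  have hanti : Antitone f := antitone_nat_of_succ_le hf
  obtain ⟨L, rfl⟩ : ∃ L, len = L + 2 := by
    match len, hsum with
    | 0, h => simp at h
    | 1, h => simp at h; omega
    | L + 2, _ => exact ⟨L, rfl⟩
  obtain ⟨a, haL, ha, hmax⟩ : ∃ a ≤ L, f a = f 0 ∧ ∀ i, a < i → i ≤ L → f i < f 0 := by
    refine ⟨Nat.findGreatest (fun i => f i = f 0) L, Nat.findGreatest_le L,
      Nat.findGreatest_spec (P := fun i => f i = f 0) (Nat.zero_le L) rfl, fun i hi hiL => ?_⟩
    exact lt_of_le_of_ne (hanti (Nat.zero_le i))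
      (Nat.findGreatest_is_greatest (P := fun i => f i = f 0) hi hiL)
  have hposL := hpos (L + 1) (by omega)
  have hposa := hpos a (by omega)
  let g : ℕ → ℕ := fun i => f i - ((if i = a then 1 else 0) + if i = L + 1 then 1 else 0)
  have hg : ∀ i, f i = g i + ((if i = a then 1 else 0) + if i = L + 1 then 1 else 0) := by
    intro i
    dsimp only [g]
    split_ifs with h₁ h₂ h₂
    · omega
    · subst h₁; omega
    · subst h₂; omega
    · omega
  have hganti : Antitone g := by
    refine antitone_nat_of_succ_le fun i => ?_
    have h₀ := hf i
    have h₁ := hmax (i + 1)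
    have h₂ := hzero (i + 1)
    dsimp only [g]
    by_cases hia : i = a
    · subst hia
      split_ifs <;> omega
    · split_ifs <;> omega
  have hgsum : ∑ j ∈ Finset.range (L + 2), g j = 2 * k := by
    rw [Finset.sum_congr rfl fun i _ => hg i, Finset.sum_add_distrib, Finset.sum_add_distrib,
      Finset.sum_ite_eq', Finset.sum_ite_eq', if_pos (by simp; omega), if_pos (by simp)] at hsum
    omega
  obtain ⟨ν, hν⟩ := PartitionOf.exists_parts_eq g hganti (L + 2)
    (by have := hg (L + 2); have := hzero (L + 2) le_rfl; omega) hgsum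
  refine ⟨ν, ?_, fun i => ?_⟩
  · rw [hν]
    have h₀ := hg 0
    by_cases ha0 : a = 0
    · subst ha0
      simp at h₀
      omega
    · have hle : ∑ j ∈ {0, a, L + 1}, f j ≤ ∑ j ∈ Finset.range (L + 2), f j := by
        refine Finset.sum_le_sum_of_subset fun j hj => ?_
        simp only [Finset.mem_insert, Finset.mem_singleton] at hj
        simp only [Finset.mem_range]
        omega
      rw [hsum, Finset.sum_insert (by simp; omega), Finset.sum_pair (by omega)] at hle
      omega
  · have h := hg i
    rw [hν]
    split_ifs at h <;> omega

/-- For every partition `μ` of `2k` with `μ₁ ≤ k` there is a chain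
`∅ = λ⁰, λ¹, …, λ^k = μ` of partitions with `|λ^j| = 2j` and `λ^j₁ ≤ j`, each
obtained from the previous one by adding two boxes, no two in the same row. -/
theorem exists_vertical_strip_chain (k : ℕ) (μ : PartitionOf (2 * k))
    (hμ : μ.parts 0 ≤ k) :
    ∃ lam : (j : ℕ) → PartitionOf (2 * j),
      (∀ i : ℕ, (lam 0).parts i = 0) ∧
      (lam k).parts = μ.parts ∧
      (∀ j : ℕ, j ≤ k → (lam j).parts 0 ≤ j) ∧
      ∀ j : ℕ, j < k → ∀ i : ℕ,
        (lam j).parts i ≤ (lam (j + 1)).parts i ∧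
        (lam (j + 1)).parts i ≤ (lam j).parts i + 1 := by
  induction k with
  | zero =>
    have default : (j : ℕ) → PartitionOf (2 * j) := fun j => (PartitionOf.nonempty _).some
    refine ⟨Function.update default 0 μ, fun i => ?_, by simp, fun j hj => ?_, by simp⟩
    · rw [Function.update_self]
      exact Nat.le_zero.mp ((antitone_nat_of_succ_le μ.antitone (Nat.zero_le i)).trans hμ)
    · obtain rfl := Nat.le_zero.mp hj
      simpa using hμ
  | succ k ih =>
    obtain ⟨ν, hν, hstrip⟩ := PartitionOf.exists_remove_two k μ hμ
    obtain ⟨lam, hzero, hlast, hfirst, hstep⟩ := ih ν hν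
    refine ⟨Function.update lam (k + 1) μ, fun i => ?_, by simp, fun j hj => ?_,
      fun j hj i => ?_⟩
    · rw [Function.update_of_ne (by omega)]
      exact hzero i
    · rcases Nat.le_succ_iff.mp hj with h | rfl
      · rw [Function.update_of_ne (by omega)]
        exact hfirst j h
      · simpa using hμ
    · rw [Function.update_of_ne (a := j) (by omega)]
      rcases Nat.lt_succ_iff_lt_or_eq.mp hj with h | rfl
      · rw [Function.update_of_ne (by omega)]
        exact hstep j h i
      · rw [Function.update_self, hlast]
        exact hstrip i
end
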